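/- arXiv:1609.08740 — 2 statements merged into one kernel-verified Lean document; each statement's English description precedes it below -/
import Mathlib

section
/- Let n be a positive integer, let Q0 be a real symmetric (n+1)×(n+1) matrix with zero diagonal, and suppose there exist λ ∈ ℝ and a real (n+1)×(n+1) matrix V such that Q0 + λI = Vᵀ V; let v_i denote the i-th column of V, and set K = ⌊(n+1)/2⌋ + 1. Then a vector c* ∈ {0,1}^n with Σ_{i=1}^n c*_i = ⌊(n+1)/2⌋ maximizes c̃ᵀ Q0 c̃ (where c̃ = (c,1) ∈ ℝ^{n+1}) over all such vectors c if and only if the subset V1* = {i ≤ n : c*_i = 1} ∪ {n+1} minimizes the clustering cost f(V1) = Σ_{i∈V1} ‖v_i − (1/K) Σ_{j∈V1} v_j‖² over all subsets V1 ⊆ {1,…,n+1} with |V1| = K and n+1 ∈ V1. -/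
open Matrix Finset

/-!
The cost of a set `S` of columns is `∑_{i ∈ S} ‖v_i‖² - (1/|S|) ‖∑_{i ∈ S} v_i‖²`, so it depends
only on the Gram matrix `Vᵀ V = Q + λ I`. When the diagonal of `Q` is constant, all columns have the
same norm, and among sets of a fixed size the cost is a constant minus `(1/|S|) ∑_{i, j ∈ S} Q i j`.
The double sum is the value of the quadratic form `Q` at the indicator vector of `S`, and the
vectors `(c, 1)` with `c` binary are the indicator vectors of the sets containing the last index.
-/

section Cost

variable {F ι p : Type*} [Field F]

lemma sum_sub_mean_sq (S : Finset ι) (f : ι → F) :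
    ∑ i ∈ S, (f i - 1 / (#S : F) * ∑ j ∈ S, f j) ^ 2 =
      ∑ i ∈ S, f i ^ 2 - 1 / (#S : F) * (∑ i ∈ S, f i) ^ 2 := by
  -- Stated in this form, the cancellation also covers the case `(#S : F) = 0`.
  have hinv : (#S : F) * (#S : F)⁻¹ ^ 2 = (#S : F)⁻¹ := by
    rw [sq, ← mul_assoc]
    simpa only [inv_inv, mul_comm] using inv_mul_mul_self (#S : F)⁻¹
  simp only [sub_sq, sum_add_distrib, sum_sub_distrib, ← sum_mul, ← mul_sum, sum_const,
    nsmul_eq_mul, one_div]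
  linear_combination (∑ i ∈ S, f i) ^ 2 * hinv

variable [Fintype p]

/-- The clustering cost `f(S)` of the columns of `V` indexed by `S`: the sum of the squared
Euclidean distances of these columns to their centroid. The squared distances are written in
coordinates, which makes sense over any field. -/
def clusterCost (V : Matrix p ι F) (S : Finset ι) : F :=
  ∑ i ∈ S, ∑ k, (V k i - 1 / (#S : F) * ∑ j ∈ S, V k j) ^ 2

lemma clusterCost_eq_gram (V : Matrix p ι F) (S : Finset ι) :
    clusterCost V S =
      ∑ i ∈ S, (Vᵀ * V) i i - 1 / (#S : F) * ∑ i ∈ S, ∑ j ∈ S, (Vᵀ * V) i j := by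
  have hnorm : ∑ i ∈ S, (Vᵀ * V) i i = ∑ k, ∑ i ∈ S, V k i ^ 2 := by
    simp only [mul_apply, transpose_apply, ← sq]
    exact sum_comm
  have hcentroid : ∑ i ∈ S, ∑ j ∈ S, (Vᵀ * V) i j = ∑ k, (∑ i ∈ S, V k i) ^ 2 := by
    simp only [mul_apply, transpose_apply, sq, sum_mul_sum]
    rw [sum_comm (s := (univ : Finset p))]
    exact sum_congr rfl fun i _ ↦ sum_comm
  rw [clusterCost, sum_comm, hnorm, hcentroid, mul_sum, ← sum_sub_distrib]
  exact sum_congr rfl fun k _ ↦ sum_sub_mean_sq S (V k)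

variable [DecidableEq ι] {Q : Matrix ι ι F} {d lam : F} {V : Matrix p ι F}

lemma clusterCost_eq_of_add_smul_one_eq_gram (hdiag : ∀ i, Q i i = d)
    (hV : Q + lam • (1 : Matrix ι ι F) = Vᵀ * V) (S : Finset ι) :
    clusterCost V S =
      #S * (d + lam) - 1 / (#S : F) * (∑ i ∈ S, ∑ j ∈ S, Q i j + #S * lam) := by
  have hnorm : ∑ i ∈ S, (Vᵀ * V) i i = #S * (d + lam) := by
    simp [← hV, hdiag, mul_add]
  have hcentroid :
      ∑ i ∈ S, ∑ j ∈ S, (Vᵀ * V) i j = ∑ i ∈ S, ∑ j ∈ S, Q i j + #S * lam := by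
    simp [← hV, one_apply, sum_add_distrib]
  rw [clusterCost_eq_gram, hnorm, hcentroid]

lemma clusterCost_le_clusterCost_iff [LinearOrder F] [IsStrictOrderedRing F]
    (hdiag : ∀ i, Q i i = d) (hV : Q + lam • (1 : Matrix ι ι F) = Vᵀ * V) {S T : Finset ι}
    (hcard : #S = #T) :
    clusterCost V S ≤ clusterCost V T ↔
      ∑ i ∈ T, ∑ j ∈ T, Q i j ≤ ∑ i ∈ S, ∑ j ∈ S, Q i j := by
  rcases T.eq_empty_or_nonempty with rfl | hT
  · rw [card_eq_zero.1 hcard]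
    simp
  have hinv : 0 < 1 / (#T : F) := one_div_pos.2 (Nat.cast_pos.2 hT.card_pos)
  rw [clusterCost_eq_of_add_smul_one_eq_gram hdiag hV,
    clusterCost_eq_of_add_smul_one_eq_gram hdiag hV, hcard, sub_le_sub_iff_left,
    mul_le_mul_iff_right₀ hinv, add_le_add_iff_right]

end Cost

section Indicator

variable {R : Type*}

lemma sum_indicator_mul_mul_indicator {ι : Type*} [Fintype ι] [NonAssocSemiring R]
    (Q : Matrix ι ι R) (S : Finset ι) :
    ∑ i, ∑ j, (S : Set ι).indicator 1 i * Q i j * (S : Set ι).indicator 1 j =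
      ∑ i ∈ S, ∑ j ∈ S, Q i j := by
  classical simp [Set.indicator_apply]

lemma eq_indicator_one_of_mem_iff {ι : Type*} [Zero R] [One R] {x : ι → R}
    (hx : ∀ i, x i = 0 ∨ x i = 1) {S : Finset ι} (hS : ∀ i, i ∈ S ↔ x i = 1) :
    x = (S : Set ι).indicator 1 := by
  funext i
  by_cases hi : i ∈ S
  · simp [hi, (hS i).1 hi]
  · simp [hi, (hx i).resolve_right (mt (hS i).2 hi)]

variable {n : ℕ} {c : Fin n → R} {S : Finset (Fin (n + 1))}

lemma snoc_one_eq_indicator_one [Zero R] [One R] (hc : ∀ i, c i = 0 ∨ c i = 1)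
    (hS : ∀ i, i ∈ S ↔ (Fin.snoc c 1 : Fin (n + 1) → R) i = 1) :
    (Fin.snoc c 1 : Fin (n + 1) → R) = (S : Set (Fin (n + 1))).indicator 1 :=
  eq_indicator_one_of_mem_iff (Fin.lastCases (by simp) (by simpa using hc)) hS

variable [NonAssocRing R] [CharZero R]

lemma sum_eq_natCast_iff_card_eq_add_one
    (hcS : (Fin.snoc c 1 : Fin (n + 1) → R) = (S : Set (Fin (n + 1))).indicator 1) (s : ℕ) :
    ∑ i, c i = s ↔ #S = s + 1 := by
  have hsum : ∑ i, c i + 1 = #S := by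
    classical
    rw [← Fin.sum_snoc, hcS]
    simp [Set.indicator_apply]
  rw [← add_left_inj (1 : R), hsum]
  norm_cast

lemma forall_snoc_one_iff_forall_indicator_one (s : ℕ) {P : (Fin (n + 1) → R) → Prop} :
    (∀ c : Fin n → R, (∀ i, c i = 0 ∨ c i = 1) → ∑ i, c i = s → P (Fin.snoc c 1)) ↔
      ∀ S : Finset (Fin (n + 1)), #S = s + 1 → Fin.last n ∈ S →
        P ((S : Set (Fin (n + 1))).indicator 1) := by
  classical
  constructor
  · intro hP S hcard hlast
    let x : Fin (n + 1) → R := (S : Set (Fin (n + 1))).indicator 1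
    have hx : (Fin.snoc (Fin.init x) 1 : Fin (n + 1) → R) = x := by
      simpa [x, hlast] using Fin.snoc_init_self x
    have hbinary (i : Fin n) : Fin.init x i = 0 ∨ Fin.init x i = 1 :=
      Set.indicator_eq_zero_or_self _ _ _
    simpa only [hx] using hP _ hbinary ((sum_eq_natCast_iff_card_eq_add_one hx s).2 hcard)
  · intro hP c hc hsum
    let S : Finset (Fin (n + 1)) := {i | (Fin.snoc c 1 : Fin (n + 1) → R) i = 1}
    have hcS := snoc_one_eq_indicator_one (S := S) hc (by simp [S])
    rw [hcS]
    exact hP S ((sum_eq_natCast_iff_card_eq_add_one hcS s).1 hsum) (by simp [S])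

end Indicator

theorem bqp_equiv_clustering_general {F p : Type*} [Field F] [LinearOrder F]
    [IsStrictOrderedRing F] [Fintype p] {n : ℕ} {Q : Matrix (Fin (n + 1)) (Fin (n + 1)) F}
    {d lam : F} (hdiag : ∀ i, Q i i = d) {V : Matrix p (Fin (n + 1)) F}
    (hV : Q + lam • (1 : Matrix (Fin (n + 1)) (Fin (n + 1)) F) = Vᵀ * V)
    {s : ℕ} {c : Fin n → F} (hc : ∀ i, c i = 0 ∨ c i = 1) (hsum : ∑ i, c i = s)
    {S : Finset (Fin (n + 1))} (hS : ∀ i, i ∈ S ↔ (Fin.snoc c 1 : Fin (n + 1) → F) i = 1) :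
    (∀ c' : Fin n → F, (∀ i, c' i = 0 ∨ c' i = 1) → ∑ i, c' i = s →
        ∑ i, ∑ j, (Fin.snoc c' 1 : Fin (n + 1) → F) i * Q i j *
            (Fin.snoc c' 1 : Fin (n + 1) → F) j ≤
          ∑ i, ∑ j, (Fin.snoc c 1 : Fin (n + 1) → F) i * Q i j *
            (Fin.snoc c 1 : Fin (n + 1) → F) j) ↔
      ∀ T : Finset (Fin (n + 1)), #T = s + 1 → Fin.last n ∈ T →
        clusterCost V S ≤ clusterCost V T := by
  have hsnoc := snoc_one_eq_indicator_one hc hS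
  have hcard := (sum_eq_natCast_iff_card_eq_add_one hsnoc s).1 hsum
  rw [hsnoc, sum_indicator_mul_mul_indicator, forall_snoc_one_iff_forall_indicator_one s
    (P := fun x ↦ ∑ i, ∑ j, x i * Q i j * x j ≤ ∑ i ∈ S, ∑ j ∈ S, Q i j)]
  refine forall₃_congr fun T hT _ ↦ ?_
  rw [sum_indicator_mul_mul_indicator,
    clusterCost_le_clusterCost_iff hdiag hV (hcard.trans hT.symm)]

/-- Equivalence of the constrained binary quadratic program and the clustering problem
(Theorem 1 of the paper): with Q0 + λI = Vᵀ V, a feasible c* ∈ {0,1}^n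
(with Σ c*_i = ⌊(n+1)/2⌋) maximizes c̃ᵀ Q0 c̃ over all feasible c if and only if the
subset V1* = {i ≤ n : c*_i = 1} ∪ {n+1} minimizes the clustering cost over all
subsets V1 ⊆ {1,…,n+1} of size K = ⌊(n+1)/2⌋ + 1 containing the index n+1. -/
theorem bqp_equiv_clustering (n : ℕ) (hn : 0 < n)
    (Q0 : Matrix (Fin (n + 1)) (Fin (n + 1)) ℝ)
    (hsymm : Q0.IsSymm) (hdiag : ∀ i, Q0 i i = 0)
    (lam : ℝ) (V : Matrix (Fin (n + 1)) (Fin (n + 1)) ℝ)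
    (hV : Q0 + lam • (1 : Matrix (Fin (n + 1)) (Fin (n + 1)) ℝ) = Vᵀ * V)
    (K : ℕ) (hK : K = (n + 1) / 2 + 1)
    (c : Fin n → ℝ) (hc01 : ∀ i, c i = 0 ∨ c i = 1)
    (hcsum : ∑ i, c i = (((n + 1) / 2 : ℕ) : ℝ))
    (V1star : Finset (Fin (n + 1)))
    (hV1star : ∀ i, i ∈ V1star ↔ (Fin.snoc c 1 : Fin (n+1) → ℝ) i = 1) :
    (∀ c' : Fin n → ℝ, (∀ i, c' i = 0 ∨ c' i = 1) →
        ∑ i, c' i = (((n + 1) / 2 : ℕ) : ℝ) →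
        ∑ i, ∑ j, (Fin.snoc c' 1 : Fin (n+1) → ℝ) i * Q0 i j * (Fin.snoc c' 1 : Fin (n+1) → ℝ) j ≤
          ∑ i, ∑ j, (Fin.snoc c 1 : Fin (n+1) → ℝ) i * Q0 i j * (Fin.snoc c 1 : Fin (n+1) → ℝ) j) ↔
    (∀ V1 : Finset (Fin (n + 1)), V1.card = K → Fin.last n ∈ V1 →
        ∑ i ∈ V1star, ∑ k, (V k i - (1 / (K : ℝ)) * ∑ j ∈ V1star, V k j) ^ 2 ≤
          ∑ i ∈ V1, ∑ k, (V k i - (1 / (K : ℝ)) * ∑ j ∈ V1, V k j) ^ 2) := by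
  have hcard : #V1star = K :=
    hK ▸ (sum_eq_natCast_iff_card_eq_add_one (snoc_one_eq_indicator_one hc01 hV1star) _).1 hcsum
  rw [bqp_equiv_clustering_general hdiag hV hc01 hcsum hV1star, ← hK]
  refine forall₃_congr fun V1 hV1 _ ↦ ?_
  rw [clusterCost, clusterCost, hcard, hV1]
end

section
/- Let Q be a real symmetric n×n matrix and q ∈ ℝ^n. Define Q' = Q − diag(Q) (Q with its diagonal entries set to zero), q0 = −4 Q' 𝟙 − q ∈ ℝ^n, and the (n+1)×(n+1) symmetric matrix Q0 = [[8Q', q0],[q0ᵀ, 0]]. Then, with C = 2·𝟙ᵀ Q' 𝟙 + 2·tr(Q) + qᵀ 𝟙, for every c ∈ {0,1}^n, setting b = 2c − 𝟙 ∈ {−1,1}^n and c̃ = (c,1) ∈ ℝ^{n+1}, one has c̃ᵀ Q0 c̃ = 2 bᵀ Q b − qᵀ b − C; moreover bᵀ 𝟙 = (n mod 2) if and only if Σ_{i=1}^n c_i = ⌊(n+1)/2⌋. Hence maximizing 2 bᵀ Q b − qᵀ b over b ∈ {−1,1}^n with bᵀ 𝟙 = (n mod 2) is equivalent to maximizing c̃ᵀ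 Q0 c̃ over c ∈ {0,1}^n with Σ_i c_i = ⌊(n+1)/2⌋. -/
open Matrix Finset

/-!
A sign vector `b` has `b i ^ 2 = 1`, so the diagonal of `Q` contributes only the constant `tr Q`
to `bᵀ Q b`. Substituting `b = 2c - 𝟙` into `bᵀ Q' b` leaves, by symmetry of `Q'`, the form
`4 cᵀ Q' c - 4 cᵀ Q' 𝟙 + 𝟙ᵀ Q' 𝟙`, whose linear part is moved into the border of `Q0` and paired
with the last entry of `c̃ = (c, 1)`. The two objectives therefore differ by the constant `C` along
`c ↦ 2c - 𝟙`, and this map carries one feasible set onto the other because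
`2 ⌊(n + 1) / 2⌋ = n + n mod 2`.
-/

section OffDiagonal

variable {ι R : Type*} [DecidableEq ι] [AddCommGroup R]

/-- The matrix `Q' = Q - diag(Q)`, that is, `Q` with its diagonal entries set to zero. -/
def offDiagonal (Q : Matrix ι ι R) : Matrix ι ι R := Q - diagonal Q.diag

lemma offDiagonal_apply (Q : Matrix ι ι R) (i j : ι) :
    offDiagonal Q i j = if i = j then 0 else Q i j := by
  by_cases h : i = j <;> simp [offDiagonal, h]

lemma isSymm_offDiagonal {Q : Matrix ι ι R} (hQ : Q.IsSymm) : (offDiagonal Q).IsSymm :=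
  hQ.sub (isSymm_diagonal _)

end OffDiagonal

section QuadraticForm

variable {ι R : Type*} [Fintype ι] [CommRing R]

lemma sub_dotProduct_mulVec_sub_of_isSymm {A : Matrix ι ι R} (hA : A.IsSymm) (x y : ι → R) :
    (x - y) ⬝ᵥ A *ᵥ (x - y) = x ⬝ᵥ A *ᵥ x - 2 * (x ⬝ᵥ A *ᵥ y) + y ⬝ᵥ A *ᵥ y := by
  have hcomm : y ⬝ᵥ A *ᵥ x = x ⬝ᵥ A *ᵥ y := by rw [← dotProduct_transpose_mulVec, hA.eq]
  rw [mulVec_sub, sub_dotProduct, dotProduct_sub, dotProduct_sub, hcomm]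
  ring

lemma snoc_dotProduct_mulVec_snoc {n : ℕ} (M : Matrix (Fin (n + 1)) (Fin (n + 1)) R)
    (x : Fin n → R) (t : R) :
    (Fin.snoc x t : Fin (n + 1) → R) ⬝ᵥ M *ᵥ (Fin.snoc x t : Fin (n + 1) → R) =
      x ⬝ᵥ M.submatrix Fin.castSucc Fin.castSucc *ᵥ x +
        t * (x ⬝ᵥ fun i ↦ M i.castSucc (Fin.last n)) +
        t * (x ⬝ᵥ fun i ↦ M (Fin.last n) i.castSucc) + t ^ 2 * M (Fin.last n) (Fin.last n) := by
  simp only [dotProduct, mulVec, Fin.sum_univ_castSucc, Fin.snoc_castSucc, Fin.snoc_last,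
    submatrix_apply, sum_add_distrib, mul_add, mul_comm (M _ (Fin.last n)), mul_left_comm _ t,
    ← mul_sum, mul_comm (M (Fin.last n) _)]
  ring

lemma dotProduct_mulVec_eq_offDiagonal_add_trace [DecidableEq ι] (Q : Matrix ι ι R) {b : ι → R}
    (hb : ∀ i, b i * b i = 1) :
    b ⬝ᵥ Q *ᵥ b = b ⬝ᵥ offDiagonal Q *ᵥ b + Q.trace := by
  have hdiag : b ⬝ᵥ diagonal Q.diag *ᵥ b = Q.trace := by
    refine sum_congr rfl fun i _ ↦ ?_
    rw [mulVec_diagonal, mul_left_comm, hb, mul_one]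
  rw [offDiagonal, sub_mulVec, dotProduct_sub, hdiag, sub_add_cancel]

end QuadraticForm

section SignVector

variable {ι R : Type*} [CommRing R]

/-- The substitution `b = 2c - 𝟙`, which turns `0/1`-vectors into sign vectors. -/
def toSign (c : ι → R) : ι → R := fun i ↦ 2 * c i - 1

lemma toSign_eq_one_or_neg_one_iff [NoZeroDivisors R] [NeZero (2 : R)] (c : ι → R) (i : ι) :
    toSign c i = 1 ∨ toSign c i = -1 ↔ c i = 0 ∨ c i = 1 := by
  have hone : toSign c i = 1 ↔ c i = 1 := by
    rw [toSign, sub_eq_iff_eq_add, one_add_one_eq_two, mul_eq_left₀ two_ne_zero]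
  have hneg : toSign c i = -1 ↔ c i = 0 := by
    rw [toSign, sub_eq_iff_eq_add, neg_add_cancel, mul_eq_zero_iff_left two_ne_zero]
  rw [hone, hneg, or_comm]

lemma exists_toSign_eq {b : ι → R} (hb : ∀ i, b i = 1 ∨ b i = -1) : ∃ c, toSign c = b := by
  have hentry (i : ι) : ∃ x, 2 * x - 1 = b i := by
    rcases hb i with h | h
    · exact ⟨1, by rw [h]; ring⟩
    · exact ⟨0, by rw [h]; ring⟩
  choose c hc using hentry
  exact ⟨c, funext hc⟩

lemma toSign_mul_self {c : ι → R} {i : ι} (hc : c i = 0 ∨ c i = 1) :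
    toSign c i * toSign c i = 1 := by
  rcases hc with h | h <;> rw [toSign, h] <;> ring

variable [Fintype ι]

lemma dotProduct_toSign (q c : ι → R) : q ⬝ᵥ toSign c = 2 * (q ⬝ᵥ c) - ∑ i, q i := by
  simp only [toSign, dotProduct, mul_sub, mul_one, sum_sub_distrib, mul_sum, mul_left_comm]

lemma toSign_dotProduct_mulVec_toSign {A : Matrix ι ι R} (hA : A.IsSymm) (c : ι → R) :
    toSign c ⬝ᵥ A *ᵥ toSign c =
      4 * (c ⬝ᵥ A *ᵥ c) - 4 * (c ⬝ᵥ A *ᵥ 1) + 1 ⬝ᵥ A *ᵥ 1 := by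
  have htoSign : toSign c = (2 : R) • c - 1 := rfl
  simp only [htoSign, sub_dotProduct_mulVec_sub_of_isSymm hA, mulVec_smul, smul_dotProduct,
    dotProduct_smul, smul_eq_mul]
  ring

lemma toSign_objective_eq [DecidableEq ι] {Q : Matrix ι ι R} (hQ : Q.IsSymm) (q : ι → R)
    {c : ι → R} (hc : ∀ i, c i = 0 ∨ c i = 1) :
    2 * (toSign c ⬝ᵥ Q *ᵥ toSign c) - q ⬝ᵥ toSign c =
      8 * (c ⬝ᵥ offDiagonal Q *ᵥ c) + 2 * (c ⬝ᵥ (-4 • (offDiagonal Q *ᵥ 1) - q)) +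
        (2 * (1 ⬝ᵥ offDiagonal Q *ᵥ 1) + 2 * Q.trace + ∑ i, q i) := by
  rw [dotProduct_mulVec_eq_offDiagonal_add_trace Q fun i ↦ toSign_mul_self (hc i),
    toSign_dotProduct_mulVec_toSign (isSymm_offDiagonal hQ), dotProduct_toSign, dotProduct_sub,
    dotProduct_smul, dotProduct_comm c q, zsmul_eq_mul]
  push_cast
  ring

variable (ι) in
/-- The `0/1`-vectors with entry sum `k`: the feasible set of the transformed problem. -/
def binaryVectors (k : R) : Set (ι → R) :=
  {c | (∀ i, c i = 0 ∨ c i = 1) ∧ ∑ i, c i = k}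

variable (ι) in
/-- The `±1`-vectors with entry sum `m`: the feasible set of the original problem. -/
def signVectors (m : R) : Set (ι → R) :=
  {b | (∀ i, b i = 1 ∨ b i = -1) ∧ ∑ i, b i = m}

variable [NoZeroDivisors R] [NeZero (2 : R)] {k m : R}

lemma sum_toSign_eq_iff (hkm : 2 * k = Fintype.card ι + m) (c : ι → R) :
    ∑ i, toSign c i = m ↔ ∑ i, c i = k := by
  have hsum : ∑ i, toSign c i = 2 * ∑ i, c i - Fintype.card ι := by
    simp only [toSign, sum_sub_distrib, mul_sum, sum_const, card_univ, nsmul_one]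
  rw [hsum, sub_eq_iff_eq_add', ← hkm, mul_right_inj' two_ne_zero]

lemma toSign_image_binaryVectors (hkm : 2 * k = Fintype.card ι + m) :
    toSign '' binaryVectors ι k = signVectors ι m := by
  have hmem (c : ι → R) : toSign c ∈ signVectors ι m ↔ c ∈ binaryVectors ι k :=
    and_congr (forall_congr' (toSign_eq_one_or_neg_one_iff c)) (sum_toSign_eq_iff hkm c)
  refine Set.Subset.antisymm (Set.image_subset_iff.2 fun c ↦ (hmem c).2) fun b hb ↦ ?_
  obtain ⟨c, rfl⟩ := exists_toSign_eq hb.1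
  exact Set.mem_image_of_mem toSign ((hmem c).1 hb)

end SignVector

lemma isMaxOn_image_iff_of_eq_sub_const {α β γ : Type*} [AddGroup γ] [Preorder γ]
    [AddRightMono γ] {e : α → β} {f : β → γ} {g : α → γ} {s : Set α} {a : α} {C : γ}
    (hg : ∀ x ∈ s, g x = f (e x) - C) (ha : a ∈ s) :
    IsMaxOn f (e '' s) (e a) ↔ IsMaxOn g s a := by
  simp only [isMaxOn_iff, Set.forall_mem_image]
  refine forall₂_congr fun x hx ↦ ?_
  rw [hg x hx, hg a ha, sub_le_sub_iff_right]

theorem bqp_transform_general {R : Type*} [CommRing R] [LinearOrder R] [IsStrictOrderedRing R]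
    {n : ℕ} {Q Q' : Matrix (Fin n) (Fin n) R} {q q0 : Fin n → R}
    {Q0 : Matrix (Fin (n + 1)) (Fin (n + 1)) R} {C : R} (hQsymm : Q.IsSymm)
    (hQ' : ∀ i j, Q' i j = if i = j then 0 else Q i j)
    (hq0 : ∀ i, q0 i = -4 * (∑ j, Q' i j) - q i)
    (hQ0block : ∀ i j : Fin n, Q0 i.castSucc j.castSucc = 8 * Q' i j)
    (hQ0col : ∀ i : Fin n, Q0 i.castSucc (Fin.last n) = q0 i)
    (hQ0row : ∀ j : Fin n, Q0 (Fin.last n) j.castSucc = q0 j)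
    (hQ0corner : Q0 (Fin.last n) (Fin.last n) = 0)
    (hC : C = 2 * (∑ i, ∑ j, Q' i j) + 2 * (∑ i, Q i i) + ∑ i, q i) :
    let objective (b : Fin n → R) : R := 2 * (b ⬝ᵥ Q *ᵥ b) - q ⬝ᵥ b
    let liftedForm (c : Fin n → R) : R :=
      (Fin.snoc c 1 : Fin (n + 1) → R) ⬝ᵥ Q0 *ᵥ (Fin.snoc c 1 : Fin (n + 1) → R)
    let m : R := (n % 2 : ℕ)
    let k : R := ((n + 1) / 2 : ℕ)
    (∀ c : Fin n → R, (∀ i, c i = 0 ∨ c i = 1) →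
      liftedForm c = objective (toSign c) - C ∧ (∑ i, toSign c i = m ↔ ∑ i, c i = k)) ∧
    ∀ c ∈ binaryVectors (Fin n) k,
      IsMaxOn objective (signVectors (Fin n) m) (toSign c) ↔
        IsMaxOn liftedForm (binaryVectors (Fin n) k) c := by
  intro objective liftedForm m k
  obtain rfl : Q' = offDiagonal Q := ext fun i j ↦ by rw [hQ', offDiagonal_apply]
  obtain rfl : q0 = -4 • (offDiagonal Q *ᵥ 1) - q := funext fun i ↦ by
    simp [hq0, mulVec, dotProduct_one]
  have hblock : Q0.submatrix Fin.castSucc Fin.castSucc = (8 : R) • offDiagonal Q := ext hQ0block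
  have hconst : 2 * (1 ⬝ᵥ offDiagonal Q *ᵥ 1) + 2 * Q.trace + ∑ i, q i = C := by
    simp only [hC, one_dotProduct, mulVec, dotProduct_one, trace, diag_apply]
  have hlift (c : Fin n → R) (hc : ∀ i, c i = 0 ∨ c i = 1) :
      liftedForm c = objective (toSign c) - C := by
    simp only [liftedForm, objective]
    rw [toSign_objective_eq hQsymm q hc, snoc_dotProduct_mulVec_snoc, hblock,
      funext hQ0col, funext hQ0row, hQ0corner, smul_mulVec, dotProduct_smul, smul_eq_mul, hconst]
    ring
  have hkm : 2 * k = Fintype.card (Fin n) + m := by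
    have hnat : 2 * ((n + 1) / 2) = n + n % 2 := by lia
    simp only [k, m, Fintype.card_fin]
    exact_mod_cast hnat
  refine ⟨fun c hc ↦ ⟨hlift c hc, sum_toSign_eq_iff hkm c⟩, fun c hc ↦ ?_⟩
  rw [← toSign_image_binaryVectors hkm]
  exact isMaxOn_image_iff_of_eq_sub_const (fun x hx ↦ hlift x hx.1) hc

/-- Transformation of the BQP over {−1,1}^n with a balance constraint into a BQP over
{0,1}^n without a linear term: c̃ᵀ Q0 c̃ = 2 bᵀ Q b − qᵀ b − C for b = 2c − 𝟙, the
constraint bᵀ𝟙 = n mod 2 corresponds to Σ c_i = ⌊(n+1)/2⌋, and hence the two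
constrained maximization problems are equivalent. -/
theorem bqp_transform (n : ℕ)
    (Q : Matrix (Fin n) (Fin n) ℝ) (hQsymm : Q.IsSymm) (q : Fin n → ℝ)
    (Q' : Matrix (Fin n) (Fin n) ℝ)
    (hQ' : ∀ i j, Q' i j = if i = j then 0 else Q i j)
    (q0 : Fin n → ℝ) (hq0 : ∀ i, q0 i = -4 * (∑ j, Q' i j) - q i)
    (Q0 : Matrix (Fin (n + 1)) (Fin (n + 1)) ℝ)
    (hQ0block : ∀ i j : Fin n, Q0 i.castSucc j.castSucc = 8 * Q' i j)
    (hQ0col : ∀ i : Fin n, Q0 i.castSucc (Fin.last n) = q0 i)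
    (hQ0row : ∀ j : Fin n, Q0 (Fin.last n) j.castSucc = q0 j)
    (hQ0corner : Q0 (Fin.last n) (Fin.last n) = 0)
    (C : ℝ)
    (hC : C = 2 * (∑ i, ∑ j, Q' i j) + 2 * (∑ i, Q i i) + ∑ i, q i) :
    (∀ c : Fin n → ℝ, (∀ i, c i = 0 ∨ c i = 1) →
      ((∑ i, ∑ j, (Fin.snoc c 1 : Fin (n + 1) → ℝ) i * Q0 i j *
          (Fin.snoc c 1 : Fin (n + 1) → ℝ) j) =
        2 * (∑ i, ∑ j, (2 * c i - 1) * Q i j * (2 * c j - 1)) -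
          (∑ i, q i * (2 * c i - 1)) - C) ∧
      ((∑ i, (2 * c i - 1)) = ((n % 2 : ℕ) : ℝ) ↔
        (∑ i, c i) = (((n + 1) / 2 : ℕ) : ℝ))) ∧
    (∀ c : Fin n → ℝ, (∀ i, c i = 0 ∨ c i = 1) →
      (∑ i, c i) = (((n + 1) / 2 : ℕ) : ℝ) →
      ((∀ b : Fin n → ℝ, (∀ i, b i = 1 ∨ b i = -1) →
          (∑ i, b i) = ((n % 2 : ℕ) : ℝ) →
          2 * (∑ i, ∑ j, b i * Q i j * b j) - (∑ i, q i * b i) ≤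
            2 * (∑ i, ∑ j, (2 * c i - 1) * Q i j * (2 * c j - 1)) -
              (∑ i, q i * (2 * c i - 1))) ↔
        (∀ c' : Fin n → ℝ, (∀ i, c' i = 0 ∨ c' i = 1) →
          (∑ i, c' i) = (((n + 1) / 2 : ℕ) : ℝ) →
          (∑ i, ∑ j, (Fin.snoc c' 1 : Fin (n + 1) → ℝ) i * Q0 i j *
              (Fin.snoc c' 1 : Fin (n + 1) → ℝ) j) ≤
            (∑ i, ∑ j, (Fin.snoc c 1 : Fin (n + 1) → ℝ) i * Q0 i j *
              (Fin.snoc c 1 : Fin (n + 1) → ℝ) j)))) := by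
  simpa only [toSign, dotProduct, isMaxOn_iff, binaryVectors, signVectors, Set.mem_ofPred_eq,
    and_imp, mulVec, mul_sum, mul_assoc] using
    bqp_transform_general hQsymm hQ' hq0 hQ0block hQ0col hQ0row hQ0corner hC
end
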